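/- arXiv:1812.01361 — 5 statements merged into one kernel-verified Lean document; each statement's English description precedes it below -/
import Mathlib

section
/- Let v_1, v_2 : ℝ → ℝ be arbitrary functions and define S(u_1,u_2) = (v_2(u_2) − v_1(u_1))⁺ u_1 − (v_2(u_2) − v_1(u_1))⁻ u_2. Then for all real numbers u_1, u_2, S(u_1,u_2) · (H(−u_1) − H(−u_2)) ≤ 0, where H is the indicator function of [0,∞), a⁺ = max(a,0) and a⁻ = −min(a,0). -/
/-- Positive part `a⁺ = max(a,0)`. -/
noncomputable def pp (a : ℝ) : ℝ := max a 0

/-- Negative part `a⁻ = −min(a,0)`. -/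
noncomputable def np (a : ℝ) : ℝ := -(min a 0)

/-- The Heaviside function: indicator of `[0,∞)`. -/
noncomputable def Hv (a : ℝ) : ℝ := if 0 ≤ a then 1 else 0

/-- The lane-exchange source term
`S(u₁,u₂) = (v₂(u₂) − v₁(u₁))⁺ u₁ − (v₂(u₂) − v₁(u₁))⁻ u₂`. -/
noncomputable def S2 (v₁ v₂ : ℝ → ℝ) (a b : ℝ) : ℝ :=
  pp (v₂ b - v₁ a) * a - np (v₂ b - v₁ a) * b

theorem pp_nonneg (a : ℝ) : 0 ≤ pp a := le_max_right a 0

theorem np_nonneg (a : ℝ) : 0 ≤ np a := neg_nonneg.mpr (min_le_right a 0)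

theorem Hv_of_nonneg {a : ℝ} (ha : 0 ≤ a) : Hv a = 1 := if_pos ha

theorem Hv_of_neg {a : ℝ} (ha : a < 0) : Hv a = 0 := if_neg ha.not_ge

theorem Hv_mem_Icc (a : ℝ) : Hv a ∈ Set.Icc 0 1 := by
  rcases le_or_gt 0 a with ha | ha
  · simp [Hv_of_nonneg ha]
  · simp [Hv_of_neg ha]

theorem Hv_neg_mul_le_mul {s : ℝ} (hs : s ∈ Set.Icc 0 1) (u : ℝ) : Hv (-u) * u ≤ s * u := by
  rcases le_or_gt u 0 with hu | hu
  · rw [Hv_of_nonneg (neg_nonneg.mpr hu)]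
    exact mul_le_mul_of_nonpos_right hs.2 hu
  · rw [Hv_of_neg (neg_neg_of_pos hu), zero_mul]
    exact mul_nonneg hs.1 hu.le

/- The two exchange terms have the right sign separately: `H(-a)` minimizes `s ↦ s * a` over
`[0, 1]`, where `H(-b)` is a competitor, and symmetrically for `b`. -/
theorem source_sign_nonnegativity_general {p q : ℝ} (hp : 0 ≤ p) (hq : 0 ≤ q) (a b : ℝ) :
    (p * a - q * b) * (Hv (-a) - Hv (-b)) ≤ 0 := by
  have ha : Hv (-a) * a ≤ Hv (-b) * a := Hv_neg_mul_le_mul (Hv_mem_Icc (-b)) a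
  have hb : Hv (-b) * b ≤ Hv (-a) * b := Hv_neg_mul_le_mul (Hv_mem_Icc (-a)) b
  calc (p * a - q * b) * (Hv (-a) - Hv (-b))
      = p * (Hv (-a) * a - Hv (-b) * a) + q * (Hv (-b) * b - Hv (-a) * b) := by ring
    _ ≤ 0 := add_nonpos (mul_nonpos_of_nonneg_of_nonpos hp (sub_nonpos.mpr ha))
        (mul_nonpos_of_nonneg_of_nonpos hq (sub_nonpos.mpr hb))

/-- **Sign estimate for the source term.** For arbitrary velocity functions and all reals
`u₁, u₂`, one has `S(u₁,u₂) (H(−u₁) − H(−u₂)) ≤ 0`. -/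
theorem source_sign_nonnegativity (v₁ v₂ : ℝ → ℝ) (u₁ u₂ : ℝ) :
    S2 v₁ v₂ u₁ u₂ * (Hv (-u₁) - Hv (-u₂)) ≤ 0 :=
  source_sign_nonnegativity_general (pp_nonneg _) (np_nonneg _) u₁ u₂
end

section
/- Let v_1, v_2 : ℝ → ℝ be nonincreasing functions with v_1(1) = v_2(1) = 0, and define S(u_1,u_2) = (v_2(u_2) − v_1(u_1))⁺ u_1 − (v_2(u_2) − v_1(u_1))⁻ u_2. Then for all real numbers u_1 ≥ 0 and u_2 ≥ 0, S(u_1,u_2) · (H(u_2 − 1) − H(u_1 − 1)) ≤ 0, where H is the indicator function of [0,∞), a⁺ = max(a,0) and a⁻ = −min(a,0). -/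
/-!
The Heaviside difference vanishes unless exactly one lane is at or above the threshold. As the
velocities are nonincreasing and agree at the threshold, that lane is no faster than the other,
so any exchange leaves it. The speed difference is then multiplied by the density of the lane being
left, which is at least the threshold and hence nonnegative.
-/

theorem le_of_antitone_of_le_of_le {α β : Type*} [Preorder α] [Preorder β] {f g : α → β}
    {a b c : α} (hf : Antitone f) (hg : Antitone g) (hac : a ≤ c) (hcb : c ≤ b)
    (hc : g c ≤ f c) : g b ≤ f a :=
  (hg hcb).trans (hc.trans (hf hac))

theorem Hv_sub_of_le {c u : ℝ} (h : c ≤ u) : Hv (u - c) = 1 :=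
  if_pos (sub_nonneg.2 h)

theorem Hv_sub_of_lt {c u : ℝ} (h : u < c) : Hv (u - c) = 0 :=
  if_neg (sub_neg.2 h).not_ge

section SourceTerm

variable {v₁ v₂ : ℝ → ℝ} {a b : ℝ}

theorem S2_of_le (h : v₁ a ≤ v₂ b) : S2 v₁ v₂ a b = (v₂ b - v₁ a) * a := by
  have hd : 0 ≤ v₂ b - v₁ a := sub_nonneg.2 h
  simp only [S2, pp, np, max_eq_left hd, min_eq_right hd, neg_zero, zero_mul, sub_zero]

theorem S2_of_ge (h : v₂ b ≤ v₁ a) : S2 v₁ v₂ a b = (v₂ b - v₁ a) * b := by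
  have hd : v₂ b - v₁ a ≤ 0 := sub_nonpos.2 h
  simp only [S2, pp, np, max_eq_right hd, min_eq_left hd, zero_mul, zero_sub, neg_mul, neg_neg]

theorem S2_nonneg (h : v₁ a ≤ v₂ b) (ha : 0 ≤ a) : 0 ≤ S2 v₁ v₂ a b :=
  S2_of_le h ▸ mul_nonneg (sub_nonneg.2 h) ha

theorem S2_nonpos (h : v₂ b ≤ v₁ a) (hb : 0 ≤ b) : S2 v₁ v₂ a b ≤ 0 :=
  S2_of_ge h ▸ mul_nonpos_of_nonpos_of_nonneg (sub_nonpos.2 h) hb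

end SourceTerm

theorem source_sign_upper_bound_general {v₁ v₂ : ℝ → ℝ} {c : ℝ}
    (hmono₁ : Antitone v₁) (hmono₂ : Antitone v₂) (hc : 0 ≤ c) (hv : v₁ c = v₂ c) (u₁ u₂ : ℝ) :
    S2 v₁ v₂ u₁ u₂ * (Hv (u₂ - c) - Hv (u₁ - c)) ≤ 0 := by
  rcases lt_or_ge u₁ c with h₁ | h₁ <;> rcases lt_or_ge u₂ c with h₂ | h₂
  · rw [Hv_sub_of_lt h₁, Hv_sub_of_lt h₂, sub_self, mul_zero]
  · have hslow : v₂ u₂ ≤ v₁ u₁ := le_of_antitone_of_le_of_le hmono₁ hmono₂ h₁.le h₂ hv.ge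
    rw [Hv_sub_of_lt h₁, Hv_sub_of_le h₂, sub_zero, mul_one]
    exact S2_nonpos hslow (hc.trans h₂)
  · have hslow : v₁ u₁ ≤ v₂ u₂ := le_of_antitone_of_le_of_le hmono₂ hmono₁ h₂.le h₁ hv.le
    rw [Hv_sub_of_le h₁, Hv_sub_of_lt h₂, zero_sub, mul_neg_one]
    exact neg_nonpos.2 (S2_nonneg hslow (hc.trans h₁))
  · rw [Hv_sub_of_le h₁, Hv_sub_of_le h₂, sub_self, mul_zero]

/-- **Sign estimate for the source term (upper bound `1`).** For nonincreasing velocities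
with `v₁(1) = v₂(1) = 0` and all nonnegative reals `u₁, u₂`, one has
`S(u₁,u₂) (H(u₂ − 1) − H(u₁ − 1)) ≤ 0`. -/
theorem source_sign_upper_bound
    (v₁ v₂ : ℝ → ℝ) (hmono₁ : Antitone v₁) (hmono₂ : Antitone v₂)
    (hv₁ : v₁ 1 = 0) (hv₂ : v₂ 1 = 0)
    (u₁ u₂ : ℝ) (hu₁ : 0 ≤ u₁) (hu₂ : 0 ≤ u₂) :
    S2 v₁ v₂ u₁ u₂ * (Hv (u₂ - 1) - Hv (u₁ - 1)) ≤ 0 :=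
  source_sign_upper_bound_general hmono₁ hmono₂ zero_le_one (hv₁.trans hv₂.symm) u₁ u₂
end

section
/- Let v_1, v_2 : ℝ → ℝ be nonincreasing functions and define S(a,b) = (v_2(b) − v_1(a))⁺ a − (v_2(b) − v_1(a))⁻ b. Then for all nonnegative reals a, a', b, b': (i) if a ≤ a' then S(a,b) ≤ S(a',b) (S is nondecreasing in its first argument on [0,∞)), and (ii) if b ≤ b' then S(a,b') ≤ S(a,b) (S is nonincreasing in its second argument on [0,∞)). -/
section LaneExchange

variable {R M : Type*} [Ring R] [Lattice R] [AddLeftMono R]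
  [AddCommGroup M] [PartialOrder M] [IsOrderedAddMonoid M] [Module R M] [IsOrderedModule R M]

theorem posPart_smul_sub_negPart_smul_le {x y : R} {a a' b b' : M} (hxy : x ≤ y)
    (ha : 0 ≤ a) (haa' : a ≤ a') (hb' : 0 ≤ b') (hb'b : b' ≤ b) :
    x⁺ • a - x⁻ • b ≤ y⁺ • a' - y⁻ • b' :=
  have inflow : x⁺ • a ≤ y⁺ • a' := smul_le_smul' (posPart_mono hxy) haa' (posPart_nonneg y) ha
  have outflow : y⁻ • b' ≤ x⁻ • b := smul_le_smul' (negPart_anti hxy) hb'b (negPart_nonneg x) hb'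
  sub_le_sub inflow outflow

/-- The lane-exchange source term for densities in an ordered module `M` and velocities in its
lattice-ordered scalar ring `R`; `S2` is the case `R = M = ℝ`. -/
def laneExchange (v₁ v₂ : M → R) (a b : M) : M :=
  (v₂ b - v₁ a)⁺ • a - (v₂ b - v₁ a)⁻ • b

theorem monotoneOn_laneExchange_left {v₁ v₂ : M → R} {b : M}
    (hv₁ : AntitoneOn v₁ (Set.Ici 0)) (hb : 0 ≤ b) :
    MonotoneOn (fun a => laneExchange v₁ v₂ a b) (Set.Ici 0) :=
  fun _ ha _ ha' haa' => posPart_smul_sub_negPart_smul_le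
    (sub_le_sub_left (hv₁ ha ha' haa') _) ha haa' hb le_rfl

theorem antitoneOn_laneExchange_right {v₁ v₂ : M → R} {a : M}
    (hv₂ : AntitoneOn v₂ (Set.Ici 0)) (ha : 0 ≤ a) :
    AntitoneOn (laneExchange v₁ v₂ a) (Set.Ici 0) :=
  fun _ hb _ hb' hbb' => posPart_smul_sub_negPart_smul_le
    (sub_le_sub_right (hv₂ hb hb' hbb') _) ha le_rfl hb hbb'

theorem source_monotone_general {v₁ v₂ : M → R}
    (hv₁ : AntitoneOn v₁ (Set.Ici 0)) (hv₂ : AntitoneOn v₂ (Set.Ici 0)) :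
    (∀ b, 0 ≤ b → MonotoneOn (fun a => laneExchange v₁ v₂ a b) (Set.Ici 0)) ∧
      ∀ a, 0 ≤ a → AntitoneOn (laneExchange v₁ v₂ a) (Set.Ici 0) :=
  ⟨fun _ => monotoneOn_laneExchange_left hv₁, fun _ => antitoneOn_laneExchange_right hv₂⟩

end LaneExchange

theorem pp_eq_posPart (x : ℝ) : pp x = x⁺ := rfl

theorem np_eq_negPart (x : ℝ) : np x = x⁻ := (negPart_eq_neg_inf_zero x).symm

theorem S2_eq_laneExchange (v₁ v₂ : ℝ → ℝ) : S2 v₁ v₂ = laneExchange v₁ v₂ := by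
  ext a b
  simp only [S2, laneExchange, pp_eq_posPart, np_eq_negPart, smul_eq_mul]

/-- **Monotonicity of the source term.** For nonincreasing velocities, the lane-exchange
term `S` is nondecreasing in its first argument and nonincreasing in its second argument
on `[0,∞)`. -/
theorem source_monotone
    (v₁ v₂ : ℝ → ℝ) (hmono₁ : Antitone v₁) (hmono₂ : Antitone v₂) :
    (∀ a a' b : ℝ, 0 ≤ a → 0 ≤ a' → 0 ≤ b → a ≤ a' →
      S2 v₁ v₂ a b ≤ S2 v₁ v₂ a' b) ∧
    (∀ a b b' : ℝ, 0 ≤ a → 0 ≤ b → 0 ≤ b' → b ≤ b' →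
      S2 v₁ v₂ a b' ≤ S2 v₁ v₂ a b) := by
  rw [S2_eq_laneExchange]
  obtain ⟨hleft, hright⟩ :=
    source_monotone_general (hmono₁.antitoneOn (Set.Ici 0)) (hmono₂.antitoneOn (Set.Ici 0))
  exact ⟨fun _ _ b ha ha' hb haa' => hleft b hb ha ha' haa',
    fun a _ _ ha hb hb' hbb' => hright a ha hb hb' hbb'⟩
end

section
/- Let N ≥ 1, Δy > 0, and let (u_i)_{i=0}^{N+1}, (k_i)_{i=0}^{N+1}, (g_i)_{i=0}^{N+1} be real sequences. Set V_i = −k_i g_i and S_i = (V_{i+1} − V_i)⁺ u_i − (V_{i+1} − V_i)⁻ u_{i+1}, and define the divided differences D⁺a_i = (a_{i+1} − a_i)/Δy and D⁻a_i = (a_i − a_{i−1})/Δy. Then for each i = 1, …, N: (S_{i−1} − S_i)/Δy² = D⁺(u_i · D⁻(k_i g_i)) + Δy · D⁻((D⁺u_i) · (D⁺(k_i g_i))⁻), where on the right-hand side D⁺ and D⁻ act on the sequences i ↦ u_i D⁻(k_i g_i) and i ↦ (D⁺u_i)(D⁺(k_i g_i))⁻ respectively. -/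
/-- Forward divided difference `D⁺aᵢ = (aᵢ₊₁ − aᵢ)/Δy`. -/
noncomputable def Dp (dy : ℝ) (a : ℕ → ℝ) (i : ℕ) : ℝ := (a (i+1) - a i) / dy

/-- Backward divided difference `D⁻aᵢ = (aᵢ − aᵢ₋₁)/Δy`. -/
noncomputable def Dm (dy : ℝ) (a : ℕ → ℝ) (i : ℕ) : ℝ := (a i - a (i-1)) / dy

/-- The lane-exchange term `Sᵢ = (Vᵢ₊₁ − Vᵢ)⁺ uᵢ − (Vᵢ₊₁ − Vᵢ)⁻ uᵢ₊₁`. -/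
noncomputable def Sseq (u V : ℕ → ℝ) (i : ℕ) : ℝ :=
  pp (V (i+1) - V i) * u i - np (V (i+1) - V i) * u (i+1)

/-! Write `w = k g`. Since `(-a)⁺ = a⁻` and `(-a)⁻ = a⁺ = a + a⁻`, the lane exchange with velocities
`-w` is, up to the factor `-Δy`, the flux `Fⱼ = uⱼ₊₁ D⁺wⱼ + Δy (D⁺uⱼ)(D⁺wⱼ)⁻`, so the source term is
`D⁻F`. As `D⁺wⱼ = D⁻wⱼ₊₁`, the first part of `F` is the shift of `u D⁻w`, and `D⁻` of a shifted
sequence is `D⁺` of the sequence. -/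

theorem pp_eq_posPart_s14 (a : ℝ) : pp a = a⁺ := rfl

theorem np_eq_negPart_s14 (a : ℝ) : np a = a⁻ := (negPart_eq_neg_inf_zero a).symm

theorem pp_neg (a : ℝ) : pp (-a) = np a := by
  rw [pp_eq_posPart_s14, np_eq_negPart_s14, posPart_neg]

theorem np_neg (a : ℝ) : np (-a) = pp a := by
  rw [pp_eq_posPart_s14, np_eq_negPart_s14, negPart_neg]

theorem pp_eq_add_np (a : ℝ) : pp a = a + np a := by
  rw [pp_eq_posPart_s14, np_eq_negPart_s14, ← sub_eq_iff_eq_add, posPart_sub_negPart]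

theorem np_div_of_nonneg (a : ℝ) {c : ℝ} (hc : 0 ≤ c) : np (a / c) = np a / c := by
  rw [np, np, neg_div, ← min_div_div_right hc, zero_div]

theorem Dm_succ (dy : ℝ) (a : ℕ → ℝ) (i : ℕ) : Dm dy a (i + 1) = Dp dy a i := rfl

theorem Dm_shift (dy : ℝ) (a : ℕ → ℝ) {i : ℕ} (hi : 1 ≤ i) :
    Dm dy (fun j => a (j + 1)) i = Dp dy a i := by
  rw [Dm, Dp, Nat.sub_add_cancel hi]

theorem Dm_add (dy : ℝ) (a b : ℕ → ℝ) (i : ℕ) :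
    Dm dy (fun j => a j + b j) i = Dm dy a i + Dm dy b i := by
  simp only [Dm]
  ring

theorem Dm_const_mul (dy c : ℝ) (a : ℕ → ℝ) (i : ℕ) :
    Dm dy (fun j => c * a j) i = c * Dm dy a i := by
  simp only [Dm]
  ring

/-- The numerical flux between lanes `j` and `j + 1` whose backward difference is the source term:
a transport part `uⱼ₊₁ D⁺wⱼ` and a diffusive part with nonnegative coefficient `Δy (D⁺wⱼ)⁻`. -/
noncomputable def laneFlux (dy : ℝ) (u w : ℕ → ℝ) (j : ℕ) : ℝ :=
  u (j + 1) * Dp dy w j + dy * (Dp dy u j * np (Dp dy w j))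

theorem Sseq_neg (u w : ℕ → ℝ) (j : ℕ) :
    Sseq u (fun l => -w l) j
      = np (w (j + 1) - w j) * u j - pp (w (j + 1) - w j) * u (j + 1) := by
  have velocity_jump : -w (j + 1) - -w j = -(w (j + 1) - w j) := by ring
  rw [Sseq, velocity_jump, pp_neg, np_neg]

theorem Sseq_neg_eq_laneFlux {dy : ℝ} (hdy : 0 < dy) (u w : ℕ → ℝ) (j : ℕ) :
    Sseq u (fun l => -w l) j = -(dy * laneFlux dy u w j) := by
  rw [Sseq_neg, pp_eq_add_np, laneFlux, Dp, Dp, np_div_of_nonneg _ hdy.le]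
  field_simp
  ring

theorem Sseq_neg_sub_div {dy : ℝ} (hdy : 0 < dy) (u w : ℕ → ℝ) (i : ℕ) :
    (Sseq u (fun l => -w l) (i - 1) - Sseq u (fun l => -w l) i) / dy ^ 2
      = Dm dy (laneFlux dy u w) i := by
  rw [Sseq_neg_eq_laneFlux hdy, Sseq_neg_eq_laneFlux hdy, Dm]
  field_simp
  ring

theorem Dm_laneFlux (dy : ℝ) (u w : ℕ → ℝ) {i : ℕ} (hi : 1 ≤ i) :
    Dm dy (laneFlux dy u w) i
      = Dp dy (fun j => u j * Dm dy w j) i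
        + dy * Dm dy (fun j => Dp dy u j * np (Dp dy w j)) i := by
  have transport : Dm dy (fun j => u (j + 1) * Dp dy w j) i
      = Dp dy (fun j => u j * Dm dy w j) i := by
    simp only [← Dm_succ dy w]
    exact Dm_shift dy (fun j => u j * Dm dy w j) hi
  rw [← transport, ← Dm_const_mul, ← Dm_add]
  rfl

/-- **Discrete conservative form of the source term.** With `Vᵢ = −kᵢgᵢ`, for
`i = 1, …, N`:
`(Sᵢ₋₁ − Sᵢ)/Δy² = D⁺(uᵢ D⁻(kᵢgᵢ)) + Δy D⁻((D⁺uᵢ)(D⁺(kᵢgᵢ))⁻)`. -/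
theorem discrete_source_identity
    (N : ℕ) (hN : 1 ≤ N) (dy : ℝ) (hdy : 0 < dy)
    (u k g : ℕ → ℝ) (i : ℕ) (hi1 : 1 ≤ i) (hiN : i ≤ N) :
    (Sseq u (fun j => -(k j * g j)) (i-1) - Sseq u (fun j => -(k j * g j)) i) / dy^2
      = Dp dy (fun j => u j * Dm dy (fun l => k l * g l) j) i
        + dy * Dm dy (fun j => Dp dy u j * np (Dp dy (fun l => k l * g l) j)) i := by
  exact (Sseq_neg_sub_div hdy u (fun l => k l * g l) i).trans (Dm_laneFlux dy u _ hi1)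
end

section
/- Let N ≥ 1, Δy = 1/N, and let u_0, u_1, …, u_N be real numbers in [0,1] with u_0 = u_1 (so that D⁻u_1 = 0). Set u_{i−1/2} = (u_i + u_{i−1})/2 and D⁻u_i = (u_i − u_{i−1})/Δy, and also D⁺u_i = (u_{i+1} − u_i)/Δy for i ≤ N−1. Then for all 1 ≤ m ≤ ℓ ≤ N: (1/2)|u_ℓ² − u_m²| ≤ √(Δy(ℓ − m)) · ( (Δy/2) Σ_{i=1}^{N} u_i ((D⁻u_i)² + (D⁺u_i)²) )^{1/2}, where in the last sum D⁺u_N is interpreted as 0. -/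
open Set

/-!
Telescope `u_ℓ² - u_m²` along the edges `(i, i + 1)` and apply Cauchy–Schwarz. For densities in
`[0, M]` the increment `(uᵢ + uᵢ₊₁)(uᵢ₊₁ - uᵢ)` has square at most
`2M (uᵢ + uᵢ₊₁) (uᵢ₊₁ - uᵢ)²`; the two parts of this weight charge the edge once to its left end,
as a forward difference, and once to its right end, as a backward difference.
-/

theorem sq_sub_le_sub_mul_sum_sq_sub {R : Type*} [CommRing R] [LinearOrder R]
    [IsStrictOrderedRing R] (f : ℕ → R) {m l : ℕ} (hml : m ≤ l) :
    (f l - f m) ^ 2 ≤ ((l : R) - m) * ∑ i ∈ Finset.Ico m l, (f (i + 1) - f i) ^ 2 := by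
  rw [← Finset.sum_Ico_sub f hml, ← Nat.cast_sub hml, ← Nat.card_Ico]
  exact sq_sum_le_card_mul_sum_sq

theorem sq_sq_sub_sq_le {R : Type*} [CommRing R] [LinearOrder R] [IsStrictOrderedRing R]
    {a b M : R} (ha : a ∈ Icc 0 M) (hb : b ∈ Icc 0 M) :
    (b ^ 2 - a ^ 2) ^ 2 ≤ 2 * M * ((a + b) * (b - a) ^ 2) := by
  have h_nonneg : 0 ≤ a + b := add_nonneg ha.1 hb.1
  have h_le : a + b ≤ 2 * M := by linarith [ha.2, hb.2]
  calc (b ^ 2 - a ^ 2) ^ 2 = (a + b) * ((a + b) * (b - a) ^ 2) := by ring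
    _ ≤ 2 * M * ((a + b) * (b - a) ^ 2) := by gcongr

theorem sum_Ico_add_mul_le_sum_Icc {R : Type*} [Semiring R] [PartialOrder R] [IsOrderedRing R]
    {w g : ℕ → R} {N m l : ℕ} (hw : ∀ i ∈ Icc 1 N, 0 ≤ w i) (hg : ∀ i, 0 ≤ g i)
    (hm : 1 ≤ m) (hl : l ≤ N) :
    ∑ i ∈ Finset.Ico m l, (w i + w (i + 1)) * g i ≤
      ∑ i ∈ Finset.Icc 1 N, w i * (g (i - 1) + if i < N then g i else 0) := by
  have h_left : ∑ i ∈ Finset.Ico m l, w i * g i ≤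
      ∑ i ∈ Finset.Icc 1 N, w i * if i < N then g i else 0 := by
    simp only [mul_ite, mul_zero, ← Finset.sum_filter]
    refine Finset.sum_le_sum_of_subset_of_nonneg (fun i hi ↦ ?_) fun i hi _ ↦ ?_
    · simp only [Finset.mem_Ico, Finset.mem_filter, Finset.mem_Icc] at hi ⊢
      lia
    · exact mul_nonneg (hw i (Finset.mem_Icc.1 (Finset.mem_filter.1 hi).1)) (hg i)
  have h_right : ∑ i ∈ Finset.Ico m l, w (i + 1) * g i ≤
      ∑ i ∈ Finset.Icc 1 N, w i * g (i - 1) := by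
    calc ∑ i ∈ Finset.Ico m l, w (i + 1) * g i
        = ∑ i ∈ Finset.Ico (m + 1) (l + 1), w i * g (i - 1) :=
          Finset.sum_Ico_add' (fun i ↦ w i * g (i - 1)) m l 1
      _ ≤ ∑ i ∈ Finset.Icc 1 N, w i * g (i - 1) := by
          refine Finset.sum_le_sum_of_subset_of_nonneg (fun i hi ↦ ?_) fun i hi _ ↦ ?_
          · simp only [Finset.mem_Ico, Finset.mem_Icc] at hi ⊢
            lia
          · exact mul_nonneg (hw i (Finset.mem_Icc.1 hi)) (hg (i - 1))
  simp only [add_mul, mul_add, Finset.sum_add_distrib]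
  rw [add_comm]
  exact add_le_add h_right h_left

theorem sq_sq_sub_sq_le_mul_sum_Icc {R : Type*} [CommRing R] [LinearOrder R]
    [IsStrictOrderedRing R] {u : ℕ → R} {M : R} {N m l : ℕ}
    (hu : ∀ i ∈ Icc 1 N, u i ∈ Icc 0 M) (hm : 1 ≤ m) (hml : m ≤ l) (hl : l ≤ N) :
    (u l ^ 2 - u m ^ 2) ^ 2 ≤ ((l : R) - m) * (2 * M * ∑ i ∈ Finset.Icc 1 N,
      u i * ((u i - u (i - 1)) ^ 2 + (if i < N then u (i + 1) - u i else 0) ^ 2)) := by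
  have h_length : (0 : R) ≤ (l : R) - m := sub_nonneg.2 (Nat.cast_le.2 hml)
  have hM : 0 ≤ M := (hu m ⟨hm, hml.trans hl⟩).1.trans (hu m ⟨hm, hml.trans hl⟩).2
  calc (u l ^ 2 - u m ^ 2) ^ 2
      ≤ ((l : R) - m) * ∑ i ∈ Finset.Ico m l, (u (i + 1) ^ 2 - u i ^ 2) ^ 2 :=
        sq_sub_le_sub_mul_sum_sq_sub (fun i ↦ u i ^ 2) hml
    _ ≤ ((l : R) - m) *
          (2 * M * ∑ i ∈ Finset.Ico m l, (u i + u (i + 1)) * (u (i + 1) - u i) ^ 2) := by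
        gcongr
        rw [Finset.mul_sum]
        refine Finset.sum_le_sum fun i hi ↦ ?_
        obtain ⟨hmi, hil⟩ := Finset.mem_Ico.1 hi
        exact sq_sq_sub_sq_le (hu i ⟨by lia, by lia⟩) (hu (i + 1) ⟨by lia, by lia⟩)
    _ ≤ ((l : R) - m) * (2 * M * ∑ i ∈ Finset.Icc 1 N,
          u i * ((u (i - 1 + 1) - u (i - 1)) ^ 2 +
            if i < N then (u (i + 1) - u i) ^ 2 else 0)) := by
        gcongr
        exact sum_Ico_add_mul_le_sum_Icc (fun i hi ↦ (hu i hi).1) (fun i ↦ sq_nonneg _) hm hl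
    _ = ((l : R) - m) * (2 * M * ∑ i ∈ Finset.Icc 1 N,
          u i * ((u i - u (i - 1)) ^ 2 + (if i < N then u (i + 1) - u i else 0) ^ 2)) := by
        congr 2
        refine Finset.sum_congr rfl fun i hi ↦ ?_
        rw [Nat.sub_add_cancel (Finset.mem_Icc.1 hi).1, ite_pow, zero_pow two_ne_zero]

theorem discrete_lane_holder_estimate_general {u : ℕ → ℝ} {M Δy : ℝ} {N m l : ℕ}
    (hΔy : 0 < Δy) (hu : ∀ i ∈ Icc 1 N, u i ∈ Icc 0 M)
    (hm : 1 ≤ m) (hml : m ≤ l) (hl : l ≤ N) :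
    (1 / 2) * |u l ^ 2 - u m ^ 2| ≤
      √(Δy * ((l : ℝ) - m)) * √(M * (Δy / 2 * ∑ i ∈ Finset.Icc 1 N,
        u i * (((u i - u (i - 1)) / Δy) ^ 2 +
          (if i < N then (u (i + 1) - u i) / Δy else 0) ^ 2))) := by
  have h_length : (0 : ℝ) ≤ (l : ℝ) - m := sub_nonneg.2 (Nat.cast_le.2 hml)
  have h_scale : ∑ i ∈ Finset.Icc 1 N, u i * (((u i - u (i - 1)) / Δy) ^ 2 +
        (if i < N then (u (i + 1) - u i) / Δy else 0) ^ 2) =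
      (∑ i ∈ Finset.Icc 1 N, u i * ((u i - u (i - 1)) ^ 2 +
        (if i < N then u (i + 1) - u i else 0) ^ 2)) / Δy ^ 2 := by
    rw [Finset.sum_div]
    refine Finset.sum_congr rfl fun i _ ↦ ?_
    split_ifs <;> ring
  rw [h_scale, ← Real.sqrt_mul (by positivity)]
  refine Real.le_sqrt_of_sq_le ?_
  rw [mul_pow, sq_abs]
  calc (1 / 2) ^ 2 * (u l ^ 2 - u m ^ 2) ^ 2
      ≤ (1 / 2) ^ 2 * (((l : ℝ) - m) * (2 * M * ∑ i ∈ Finset.Icc 1 N,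
          u i * ((u i - u (i - 1)) ^ 2 + (if i < N then u (i + 1) - u i else 0) ^ 2))) := by
        gcongr
        exact sq_sq_sub_sq_le_mul_sum_Icc hu hm hml hl
    _ = Δy * ((l : ℝ) - m) * (M * (Δy / 2 * ((∑ i ∈ Finset.Icc 1 N,
          u i * ((u i - u (i - 1)) ^ 2 + (if i < N then u (i + 1) - u i else 0) ^ 2)) /
            Δy ^ 2))) := by
        field_simp

/-- **Discrete Cauchy–Schwarz estimate in the lane variable.** For lane densities
`u₀, u₁, …, u_N ∈ [0,1]` with `u₀ = u₁`, `Δy = 1/N`, and `1 ≤ m ≤ ℓ ≤ N`,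
`(1/2)|u_ℓ² − u_m²| ≤ √(Δy(ℓ−m)) ((Δy/2) Σ_{i=1}^N uᵢ((D⁻uᵢ)² + (D⁺uᵢ)²))^{1/2}`,
where `D⁻uᵢ = (uᵢ − uᵢ₋₁)/Δy`, `D⁺uᵢ = (uᵢ₊₁ − uᵢ)/Δy`, and `D⁺u_N` is interpreted
as `0`. -/
theorem discrete_lane_holder_estimate
    (N : ℕ) (hN : 1 ≤ N) (u : ℕ → ℝ)
    (hu : ∀ i ≤ N, u i ∈ Icc (0:ℝ) 1) (h01 : u 0 = u 1)
    (m l : ℕ) (hm : 1 ≤ m) (hml : m ≤ l) (hl : l ≤ N) :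
    (1/2) * |u l ^ 2 - u m ^ 2|
      ≤ Real.sqrt ((1/(N:ℝ)) * ((l:ℝ) - (m:ℝ))) *
          Real.sqrt (((1/(N:ℝ))/2) * ∑ i ∈ Finset.Icc 1 N,
            u i * (((N:ℝ) * (u i - u (i-1)))^2
              + (if i < N then (N:ℝ) * (u (i+1) - u i) else 0)^2)) := by
  simpa [mul_comm] using discrete_lane_holder_estimate_general (Δy := 1 / (N : ℝ)) (by positivity)
    (fun i hi ↦ hu i hi.2) hm hml hl
end
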